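/- Let d ∈ ℂ, M > 0, and let (μ_k)_{k∈ℤ} be complex numbers of the form μ_k = k + d_k with d_0 = 0 (so μ_0 = 0), |d_k − d| ≤ M/|k| for all k ≠ 0, and μ_k ≠ μ_l whenever k ≠ l. Then the limit f(z) = lim_{K→∞} z·∏_{0<|k|≤K} (1 − z/μ_k) exists locally uniformly on ℂ and defines an entire function of sine type. That is: (a) f is entire of exponential type π; (b) the zeros {μ_k} of f are separated: inf_{k≠l} |μ_k − μ_l| > 0; (c) there exist positive constants A, B, H such that A e^{π|Im z|} ≤ |f(z)| ≤ B e^{π|Im z|} for every z ∈ ℂ with |Im z| ≥ H. -/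

import Mathlib

open Real Filter

/-!
Normalise the product as `z ∏ (μ k - z) / k`. Grouping the factors of index `±k` makes it converge
absolutely as soon as the deviations `a k = μ k - k - d` are square summable. Its quotient by
Euler's product for `sin (π (z - d)) / π` is `∏ (1 + a k / (k - w))`, `w = z - d`, and by AM-GM
`∑ ‖a k‖ / ‖k - w‖` is bounded uniformly in `w` away from the real axis, so the product is
comparable to the sine there. Inside the strip left over, moving `z` vertically far enough away
from the strip containing the zeros increases the modulus of every factor, so the upper bound
persists. The zeros are separated because far from the origin they are almost integer translates
of one another.
-/

open scoped Topology

section SymmetricProducts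

variable {R : Type*} [CommMonoid R]

/-- The symmetric partial product `∏_{0 < |k| ≤ K} g k` over the integers. -/
noncomputable def symmProd (g : ℤ → R) (K : ℕ) : R :=
  ∏ k ∈ (Finset.Icc (-(K : ℤ)) (K : ℤ)).erase 0, g k

/-- The product of the factors of index `±(j + 1)`. Grouping a symmetric product by these pairs
makes it an absolutely convergent product over `ℕ`. -/
def pairFactor (g : ℤ → R) (j : ℕ) : R :=
  g (j + 1) * g (-(j + 1))

lemma symmProd_eq_prod_range (g : ℤ → R) (K : ℕ) :
    symmProd g K = ∏ j ∈ Finset.range K, pairFactor g j := by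
  induction K with
  | zero => simp [symmProd]
  | succ K ih =>
    have herase : (Finset.Icc (-((K + 1 : ℕ) : ℤ)) ((K + 1 : ℕ) : ℤ)).erase 0 =
        (Finset.Icc (-(K : ℤ)) K).erase 0 ∪ {(K : ℤ) + 1, -((K : ℤ) + 1)} := by
      grind
    rw [Finset.prod_range_succ, ← ih, symmProd, herase, Finset.prod_union (by simp),
      Finset.prod_pair (by lia)]
    rfl

lemma mul_symmProd_eq_prod_Icc (g : ℤ → R) (K : ℕ) :
    g 0 * symmProd g K = ∏ k ∈ Finset.Icc (-(K : ℤ)) K, g k :=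
  Finset.mul_prod_erase _ g (by simp)

/-- The limit of the symmetric partial products, as the unconditional product of the pair
factors; it is meaningful when `pairFactor g - 1` is summable. -/
noncomputable def symmTprod (g : ℤ → ℂ) : ℂ :=
  ∏' j : ℕ, pairFactor g j

lemma symmTprod_ne_zero {g : ℤ → ℂ} (hg : ∀ k ≠ 0, g k ≠ 0)
    (hsum : Summable fun j => ‖pairFactor g j - 1‖) : symmTprod g ≠ 0 := by
  have hpair (j : ℕ) : pairFactor g j ≠ 0 := mul_ne_zero (hg _ (by lia)) (hg _ (by lia))
  simpa [symmTprod] using tprod_one_add_ne_zero_of_summable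
    (f := fun j => pairFactor g j - 1) (fun j => by simpa using hpair j) hsum

end SymmetricProducts

section Convergence

lemma norm_pair_sub_one_le (c a b : ℂ) {n : ℝ} (hn : 1 ≤ n) :
    ‖(n + c + a) / n * ((-n + c + b) / -n) - 1‖ ≤
      2 * (‖a‖ ^ 2 + ‖b‖ ^ 2) + (1 + 2 * ‖c‖ ^ 2) / n ^ 2 := by
  have hn0 : 0 < n := one_pos.trans_le hn
  have hnC : (n : ℂ) ≠ 0 := Complex.ofReal_ne_zero.2 hn0.ne'
  have hsplit : (n + c + a) / n * ((-n + c + b) / -n) - 1 =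
      (a - b) / n - (c + a) * (c + b) / n ^ 2 := by
    field_simp
    ring
  have hlin : ‖(a - b) / n‖ ≤ (‖a‖ ^ 2 + ‖b‖ ^ 2) / 2 + 1 / n ^ 2 := by
    have hab := norm_sub_le a b
    have ha := two_mul_le_add_sq ‖a‖ (1 / n)
    have hb := two_mul_le_add_sq ‖b‖ (1 / n)
    rw [norm_div, Complex.norm_of_nonneg hn0.le]
    calc ‖a - b‖ / n ≤ (‖a‖ + ‖b‖) / n := by gcongr
      _ = (2 * ‖a‖ * (1 / n) + 2 * ‖b‖ * (1 / n)) / 2 := by ring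
      _ ≤ (‖a‖ ^ 2 + (1 / n) ^ 2 + (‖b‖ ^ 2 + (1 / n) ^ 2)) / 2 := by gcongr
      _ = (‖a‖ ^ 2 + ‖b‖ ^ 2) / 2 + 1 / n ^ 2 := by ring
  have hquad : ‖(c + a) * (c + b)‖ ≤ 2 * ‖c‖ ^ 2 + (‖a‖ ^ 2 + ‖b‖ ^ 2) := by
    have ha := norm_add_le c a
    have hb := norm_add_le c b
    rw [norm_mul]
    calc ‖c + a‖ * ‖c + b‖ ≤ (‖c‖ + ‖a‖) * (‖c‖ + ‖b‖) := by gcongr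
      _ ≤ 2 * ‖c‖ ^ 2 + (‖a‖ ^ 2 + ‖b‖ ^ 2) := by
        nlinarith [sq_nonneg (‖a‖ - ‖b‖), sq_nonneg (‖c‖ - ‖a‖), sq_nonneg (‖c‖ - ‖b‖)]
  have hquad_div : ‖(c + a) * (c + b) / n ^ 2‖ ≤
      2 * ‖c‖ ^ 2 / n ^ 2 + (‖a‖ ^ 2 + ‖b‖ ^ 2) := by
    rw [norm_div, norm_pow, Complex.norm_of_nonneg hn0.le]
    calc ‖(c + a) * (c + b)‖ / n ^ 2 ≤ (2 * ‖c‖ ^ 2 + (‖a‖ ^ 2 + ‖b‖ ^ 2)) / n ^ 2 := by gcongr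
      _ ≤ 2 * ‖c‖ ^ 2 / n ^ 2 + (‖a‖ ^ 2 + ‖b‖ ^ 2) := by
        rw [add_div]
        gcongr
        exact div_le_self (by positivity) (one_le_pow₀ hn)
  rw [hsplit]
  calc ‖(a - b) / n - (c + a) * (c + b) / n ^ 2‖
      ≤ ‖(a - b) / n‖ + ‖(c + a) * (c + b) / n ^ 2‖ := norm_sub_le _ _
    _ ≤ ((‖a‖ ^ 2 + ‖b‖ ^ 2) / 2 + 1 / n ^ 2) +
        (2 * ‖c‖ ^ 2 / n ^ 2 + (‖a‖ ^ 2 + ‖b‖ ^ 2)) := add_le_add hlin hquad_div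
    _ ≤ 2 * (‖a‖ ^ 2 + ‖b‖ ^ 2) + (1 + 2 * ‖c‖ ^ 2) / n ^ 2 := by
      rw [add_div 1]
      linarith [sq_nonneg ‖a‖, sq_nonneg ‖b‖]

variable {d : ℂ} {μ : ℤ → ℂ}

lemma exists_summable_norm_pairFactor_sub_one_le
    (hμ : Summable fun k : ℤ => ‖μ k - k - d‖ ^ 2) (r : ℝ) :
    ∃ u : ℕ → ℝ, Summable u ∧
      ∀ j z, ‖z‖ ≤ r → ‖pairFactor (fun k => (μ k - z) / k) j - 1‖ ≤ u j := by
  have hsq : Summable fun j : ℕ => (1 + 2 * (‖d‖ + r) ^ 2) / ((j : ℝ) + 1) ^ 2 := by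
    have := (summable_nat_add_iff 1).2 (Real.summable_one_div_nat_pow.2 one_lt_two)
    simpa [div_eq_mul_inv] using this.mul_left (1 + 2 * (‖d‖ + r) ^ 2)
  have hpos := hμ.comp_injective (i := fun j : ℕ => (j : ℤ) + 1) fun _ _ h => by simpa using h
  have hneg := hμ.comp_injective (i := fun j : ℕ => -((j : ℤ) + 1)) fun _ _ h => by
    simpa using h
  refine ⟨_, ((hpos.add hneg).mul_left 2).add hsq, fun j z hz => ?_⟩
  have hdz : ‖d - z‖ ≤ ‖d‖ + r := (norm_sub_le d z).trans (by gcongr)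
  have hpair := norm_pair_sub_one_le (d - z) (μ (j + 1) - ((j + 1 : ℤ) : ℂ) - d)
    (μ (-(j + 1)) - ((-(j + 1) : ℤ) : ℂ) - d) (n := j + 1) (by simp)
  calc ‖pairFactor (fun k => (μ k - z) / k) j - 1‖
      = _ := by
        simp only [pairFactor]
        push_cast
        ring_nf
    _ ≤ _ := hpair
    _ ≤ _ := by
      simp only [Function.comp_apply]
      gcongr

lemma tendstoLocallyUniformly_symmProd_sub_div
    (hμ : Summable fun k : ℤ => ‖μ k - k - d‖ ^ 2) :
    TendstoLocallyUniformly (fun K z => symmProd (fun k => (μ k - z) / k) K)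
      (fun z => symmTprod fun k => (μ k - z) / k) atTop := by
  rw [tendstoLocallyUniformly_iff_forall_isCompact]
  intro S hS
  obtain ⟨r, hr⟩ := hS.isBounded.exists_norm_le
  obtain ⟨u, hu, hbound⟩ := exists_summable_norm_pairFactor_sub_one_le hμ r
  have hprod := hu.hasProdUniformlyOn_nat_one_add hS
    (f := fun j z => pairFactor (fun k => (μ k - z) / k) j - 1)
    (.of_forall fun j z hz => hbound j z (hr z hz))
    (fun j => by simp only [pairFactor]; fun_prop)
  simpa only [symmTprod, symmProd_eq_prod_range, add_sub_cancel] using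
    hprod.tendstoUniformlyOn_finsetRange

lemma symmTprod_div_ne_zero (hμ : Summable fun k : ℤ => ‖μ k - k - d‖ ^ 2)
    (hne : ∀ k ≠ 0, μ k ≠ 0) : symmTprod (fun k => μ k / k) ≠ 0 := by
  obtain ⟨u, hu, hbound⟩ := exists_summable_norm_pairFactor_sub_one_le hμ 0
  refine symmTprod_ne_zero (fun k hk => div_ne_zero (hne k hk) (Int.cast_ne_zero.2 hk)) ?_
  exact hu.of_nonneg_of_le (fun _ => norm_nonneg _)
    (fun j => by simpa using hbound j 0 norm_zero.le)

/-- The partial canonical product with zeros `μ k`, each factor being normalised by the integer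
`k` instead of `μ k`. The nonzero constants `∏ μ k / k` relate it to `canonicalProd`. -/
noncomputable def sineProd (μ : ℤ → ℂ) (K : ℕ) (z : ℂ) : ℂ :=
  z * symmProd (fun k => (μ k - z) / k) K

/-- The limit of `sineProd μ K` as `K → ∞`; for `μ k = k` it is `sin (π z) / π`. -/
noncomputable def sineLim (μ : ℤ → ℂ) (z : ℂ) : ℂ :=
  z * symmTprod fun k => (μ k - z) / k

lemma differentiable_sineProd (μ : ℤ → ℂ) (K : ℕ) : Differentiable ℂ (sineProd μ K) := by
  unfold sineProd symmProd
  fun_prop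

lemma tendstoLocallyUniformly_sineProd (hμ : Summable fun k : ℤ => ‖μ k - k - d‖ ^ 2) :
    TendstoLocallyUniformly (sineProd μ) (sineLim μ) atTop := by
  have hprod := tendstoLocallyUniformly_symmProd_sub_div hμ
  have hid : TendstoLocallyUniformly (fun (_ : ℕ) (z : ℂ) => z) (fun z => z) atTop :=
    fun u hu z => ⟨Set.univ, univ_mem, .of_forall fun _ y _ => refl_mem_uniformity hu⟩
  have hcont : Continuous fun z => symmTprod fun k => (μ k - z) / k := by
    refine hprod.continuous (.of_forall fun K => ?_)
    unfold symmProd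
    fun_prop
  exact hid.mul₀ hprod continuous_id hcont

lemma tendsto_sineProd (hμ : Summable fun k : ℤ => ‖μ k - k - d‖ ^ 2) (z : ℂ) :
    Tendsto (fun K => sineProd μ K z) atTop (𝓝 (sineLim μ z)) :=
  (tendstoLocallyUniformlyOn_univ.2 (tendstoLocallyUniformly_sineProd hμ)).tendsto_at
    (Set.mem_univ z)

lemma differentiable_sineLim (hμ : Summable fun k : ℤ => ‖μ k - k - d‖ ^ 2) :
    Differentiable ℂ (sineLim μ) := by
  rw [← differentiableOn_univ]
  exact (tendstoLocallyUniformlyOn_univ.2 (tendstoLocallyUniformly_sineProd hμ)).differentiableOn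
    (.of_forall fun K => (differentiable_sineProd μ K).differentiableOn) isOpen_univ

lemma sineLim_apply_eq_zero (hμ : Summable fun k : ℤ => ‖μ k - k - d‖ ^ 2) (hμ0 : μ 0 = 0)
    (k : ℤ) : sineLim μ (μ k) = 0 := by
  refine tendsto_nhds_unique (tendsto_sineProd hμ (μ k)) (tendsto_const_nhds.congr' ?_)
  filter_upwards [eventually_ge_atTop k.natAbs] with K hK
  obtain rfl | hk := eq_or_ne k 0
  · simp [sineProd, hμ0]
  · have hmem : k ∈ (Finset.Icc (-(K : ℤ)) K).erase 0 := by simp [hk]; lia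
    simp [sineProd, symmProd, Finset.prod_eq_zero hmem]

/-- The partial canonical product `z ∏_{0 < |k| ≤ K} (1 - z / μ k)`. -/
noncomputable def canonicalProd (μ : ℤ → ℂ) (K : ℕ) (z : ℂ) : ℂ :=
  z * symmProd (fun k => 1 - z / μ k) K

lemma canonicalProd_eq_sineProd_div (hne : ∀ k ≠ 0, μ k ≠ 0) (K : ℕ) (z : ℂ) :
    canonicalProd μ K z = sineProd μ K z / symmProd (fun k => μ k / k) K := by
  rw [canonicalProd, sineProd, mul_div_assoc]
  congr 1
  simp only [symmProd]
  rw [← Finset.prod_div_distrib]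
  refine Finset.prod_congr rfl fun k hk => ?_
  have hk0 := Finset.ne_of_mem_erase hk
  have hμk := hne k hk0
  have hkC : (k : ℂ) ≠ 0 := Int.cast_ne_zero.2 hk0
  field_simp

lemma tendstoLocallyUniformly_canonicalProd (hμ : Summable fun k : ℤ => ‖μ k - k - d‖ ^ 2)
    (hne : ∀ k ≠ 0, μ k ≠ 0) :
    TendstoLocallyUniformly (canonicalProd μ)
      (fun z => sineLim μ z / symmTprod fun k => μ k / k) atTop := by
  have hconst : TendstoLocallyUniformly (fun K (_ : ℂ) => symmProd (fun k => μ k / k) K)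
      (fun _ => symmTprod fun k => μ k / k) atTop := by
    simpa only [Function.comp_def, sub_zero] using
      (tendstoLocallyUniformly_symmProd_sub_div hμ).comp (fun _ : ℂ => 0) continuous_const
  have hdiv := (tendstoLocallyUniformly_sineProd hμ).div₀ hconst
    (differentiable_sineLim hμ).continuous continuous_const
    (fun _ => symmTprod_div_ne_zero hμ hne)
  exact hdiv.congr fun K z => (canonicalProd_eq_sineProd_div hne K z).symm

end Convergence

section SineComparison

lemma tendsto_sineProd_intCast (w : ℂ) :
    Tendsto (fun K => sineProd (fun k => (k : ℂ)) K w) atTop (𝓝 (Complex.sin (π * w) / π)) := by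
  have hπ : (π : ℂ) ≠ 0 := Complex.ofReal_ne_zero.2 Real.pi_ne_zero
  refine ((Complex.tendsto_euler_sin_prod w).div_const (π : ℂ)).congr fun K => ?_
  rw [mul_assoc, mul_div_cancel_left₀ _ hπ, sineProd, symmProd_eq_prod_range]
  congr 1
  refine Finset.prod_congr rfl fun j _ => ?_
  have hj : (j : ℂ) + 1 ≠ 0 := Nat.cast_add_one_ne_zero j
  simp only [pairFactor]
  push_cast
  field_simp
  ring

lemma sineProd_add_eq_mul_prod {d : ℂ} {μ : ℤ → ℂ} (hμ0 : μ 0 = 0) {w : ℂ}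
    (hw : ∀ k : ℤ, (k : ℂ) ≠ w) (K : ℕ) :
    sineProd μ K (w + d) = sineProd (fun k => (k : ℂ)) K w *
      ∏ k ∈ Finset.Icc (-(K : ℤ)) K, (1 + (μ k - k - d) / (k - w)) := by
  have hfactor (k : ℤ) :
      (k - w) / k * (1 + (μ k - k - d) / (k - w)) = (μ k - (w + d)) / k := by
    have := sub_ne_zero.2 (hw k)
    field_simp
    ring
  have hw0 : w ≠ 0 := by simpa using (hw 0).symm
  have hzero : w * (1 + (μ 0 - ((0 : ℤ) : ℂ) - d) / (((0 : ℤ) : ℂ) - w)) = w + d := by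
    rw [hμ0, Int.cast_zero]
    field_simp
    ring
  rw [← mul_symmProd_eq_prod_Icc, sineProd, sineProd, mul_mul_mul_comm, hzero]
  simp only [symmProd, ← Finset.prod_mul_distrib, hfactor]

lemma norm_prod_one_add_le_exp {ι R : Type*} [NormedCommRing R] [NormOneClass R]
    (s : Finset ι) (x : ι → R) : ‖∏ i ∈ s, (1 + x i)‖ ≤ Real.exp (∑ i ∈ s, ‖x i‖) := by
  have hsub := s.norm_prod_one_add_sub_one_le x
  have htri := norm_le_norm_sub_add (∏ i ∈ s, (1 + x i)) 1
  rw [norm_one] at htri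
  linarith

lemma exp_neg_two_mul_norm_le_norm_one_add {R : Type*} [SeminormedRing R] [NormOneClass R] {x : R}
    (hx : ‖x‖ ≤ 1 / 2) : Real.exp (-(2 * ‖x‖)) ≤ ‖1 + x‖ := by
  have hx0 := norm_nonneg x
  calc Real.exp (-(2 * ‖x‖)) = (Real.exp (2 * ‖x‖))⁻¹ := Real.exp_neg _
    _ ≤ (2 * ‖x‖ + 1)⁻¹ := by
      gcongr
      exact Real.add_one_le_exp _
    _ ≤ 1 - ‖x‖ := by
      rw [inv_le_iff_one_le_mul₀ (by positivity)]
      nlinarith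
    _ ≤ ‖1 + x‖ := by simpa using norm_sub_le_norm_add (1 : R) x

lemma exp_neg_two_mul_sum_le_norm_prod_one_add {ι R : Type*} [NormedField R] {s : Finset ι}
    {x : ι → R} (hx : ∀ i ∈ s, ‖x i‖ ≤ 1 / 2) :
    Real.exp (-(2 * ∑ i ∈ s, ‖x i‖)) ≤ ‖∏ i ∈ s, (1 + x i)‖ := by
  rw [norm_prod, Finset.mul_sum, ← Finset.sum_neg_distrib, Real.exp_sum]
  exact Finset.prod_le_prod (fun _ _ => (Real.exp_pos _).le)
    fun i hi => exp_neg_two_mul_norm_le_norm_one_add (hx i hi)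

lemma abs_im_le_norm_intCast_sub (k : ℤ) (w : ℂ) : |w.im| ≤ ‖k - w‖ := by
  simpa using Complex.abs_im_le_norm (k - w)

lemma summable_one_div_one_add_int_sq : Summable fun k : ℤ => 1 / (1 + (k : ℝ) ^ 2) := by
  refine (Real.summable_one_div_int_pow.2 one_lt_two).of_norm_bounded_eventually ?_
  filter_upwards [eventually_cofinite_ne 0] with k hk
  rw [Real.norm_of_nonneg (by positivity)]
  gcongr
  linarith

lemma exists_sum_one_div_norm_intCast_sub_sq_le :
    ∃ T : ℝ, ∀ w : ℂ, 1 ≤ |w.im| → ∀ s : Finset ℤ, ∑ k ∈ s, 1 / ‖k - w‖ ^ 2 ≤ T := by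
  have hsum := summable_one_div_one_add_int_sq.mul_left 2
  refine ⟨∑' k : ℤ, 2 * (1 / (1 + (k : ℝ) ^ 2)), fun w hw s => ?_⟩
  set n := round w.re
  have hterm (k : ℤ) : 1 / ‖k - w‖ ^ 2 ≤ 2 * (1 / (1 + ((k - n : ℤ) : ℝ) ^ 2)) := by
    have hnorm : ‖k - w‖ ^ 2 = (k - w.re) ^ 2 + w.im ^ 2 := by
      rw [Complex.sq_norm, Complex.normSq_apply]
      simp [sq]
    have him : 1 ≤ w.im ^ 2 := (one_le_sq_iff_one_le_abs _).2 hw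
    have hround : (w.re - n) ^ 2 ≤ (1 / 2) ^ 2 := sq_le_sq.2 (by simpa using abs_sub_round w.re)
    rw [hnorm, mul_one_div, div_le_div_iff₀ (by positivity) (by positivity)]
    push_cast
    nlinarith [sq_nonneg ((k - w.re) - (w.re - n))]
  calc ∑ k ∈ s, 1 / ‖k - w‖ ^ 2
      ≤ ∑ k ∈ s, 2 * (1 / (1 + ((k - n : ℤ) : ℝ) ^ 2)) := Finset.sum_le_sum fun k _ => hterm k
    _ ≤ ∑' k : ℤ, 2 * (1 / (1 + ((k - n : ℤ) : ℝ) ^ 2)) :=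
      (hsum.comp_injective (sub_left_injective (b := n))).sum_le_tsum s fun _ _ => by positivity
    _ = ∑' k : ℤ, 2 * (1 / (1 + (k : ℝ) ^ 2)) :=
      (Equiv.subRight n).tsum_eq fun k : ℤ => 2 * (1 / (1 + (k : ℝ) ^ 2))

lemma exists_sum_norm_div_intCast_sub_le {a : ℤ → ℂ} (ha : Summable fun k => ‖a k‖ ^ 2) :
    ∃ S : ℝ, ∀ w : ℂ, 1 ≤ |w.im| → ∀ s : Finset ℤ, ∑ k ∈ s, ‖a k / (k - w)‖ ≤ S := by
  obtain ⟨T, hT⟩ := exists_sum_one_div_norm_intCast_sub_sq_le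
  refine ⟨(∑' k, ‖a k‖ ^ 2 + T) / 2, fun w hw s => ?_⟩
  have hterm (k : ℤ) : ‖a k / (k - w)‖ ≤ (‖a k‖ ^ 2 + 1 / ‖k - w‖ ^ 2) / 2 := by
    have := two_mul_le_add_sq ‖a k‖ (1 / ‖k - w‖)
    rw [norm_div, div_eq_mul_one_div, ← one_div_pow]
    linarith
  calc ∑ k ∈ s, ‖a k / (k - w)‖
      ≤ ∑ k ∈ s, (‖a k‖ ^ 2 + 1 / ‖k - w‖ ^ 2) / 2 := Finset.sum_le_sum fun k _ => hterm k
    _ = (∑ k ∈ s, ‖a k‖ ^ 2 + ∑ k ∈ s, 1 / ‖k - w‖ ^ 2) / 2 := by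
      rw [← Finset.sum_div, Finset.sum_add_distrib]
    _ ≤ (∑' k, ‖a k‖ ^ 2 + T) / 2 := by
      gcongr
      · exact ha.sum_le_tsum s fun _ _ => by positivity
      · exact hT w hw s

lemma exists_norm_prod_one_add_div_bounds {a : ℤ → ℂ} (ha : Summable fun k => ‖a k‖ ^ 2) :
    ∃ S H : ℝ, 0 < H ∧ ∀ w : ℂ, H ≤ |w.im| → ∀ s : Finset ℤ,
      Real.exp (-(2 * S)) ≤ ‖∏ k ∈ s, (1 + a k / (k - w))‖ ∧
        ‖∏ k ∈ s, (1 + a k / (k - w))‖ ≤ Real.exp S := by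
  obtain ⟨S, hS⟩ := exists_sum_norm_div_intCast_sub_le ha
  have htsum : 0 ≤ ∑' k, ‖a k‖ ^ 2 := tsum_nonneg fun _ => by positivity
  have hbound (k : ℤ) : ‖a k‖ ≤ ∑' k, ‖a k‖ ^ 2 + 1 := by
    nlinarith [ha.le_tsum k fun _ _ => by positivity, sq_nonneg (‖a k‖ - 1)]
  refine ⟨S, 2 * (∑' k, ‖a k‖ ^ 2 + 1), by positivity, fun w hw s => ⟨?_, ?_⟩⟩
  · have hhalf (k : ℤ) : ‖a k / (k - w)‖ ≤ 1 / 2 := by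
      have hdist := abs_im_le_norm_intCast_sub k w
      rw [norm_div, div_le_iff₀ (by linarith)]
      linarith [hbound k]
    refine le_trans ?_ (exp_neg_two_mul_sum_le_norm_prod_one_add fun k _ => hhalf k)
    gcongr
    exact hS w (by linarith) s
  · refine (norm_prod_one_add_le_exp _ _).trans ?_
    gcongr
    exact hS w (by linarith) s

lemma exists_norm_sineProd_comparable {d : ℂ} {μ : ℤ → ℂ}
    (hμ : Summable fun k : ℤ => ‖μ k - k - d‖ ^ 2) (hμ0 : μ 0 = 0) :
    ∃ a b H : ℝ, 0 < a ∧ 0 < b ∧ ∀ w : ℂ, H ≤ |w.im| → ∀ K,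
      a * ‖sineProd (fun k => (k : ℂ)) K w‖ ≤ ‖sineProd μ K (w + d)‖ ∧
        ‖sineProd μ K (w + d)‖ ≤ b * ‖sineProd (fun k => (k : ℂ)) K w‖ := by
  obtain ⟨S, H, hH, hprod⟩ := exists_norm_prod_one_add_div_bounds hμ
  refine ⟨Real.exp (-(2 * S)), Real.exp S, H, Real.exp_pos _, Real.exp_pos _, fun w hw K => ?_⟩
  have hne (k : ℤ) : (k : ℂ) ≠ w := fun h => by
    rw [← h, Complex.intCast_im, abs_zero] at hw
    linarith
  obtain ⟨hlower, hupper⟩ := hprod w hw (Finset.Icc (-(K : ℤ)) K)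
  rw [sineProd_add_eq_mul_prod hμ0 hne, norm_mul, mul_comm ‖sineProd _ K w‖]
  exact ⟨by gcongr, by gcongr⟩

end SineComparison

/-- `f` is comparable to `exp (c |Im z|)` away from the real axis: this is the growth condition
in the definition of a function of sine type `c`. -/
def HasSineGrowth (c : ℝ) (f : ℂ → ℂ) : Prop :=
  ∃ A B H : ℝ, 0 < A ∧ 0 < B ∧ 0 < H ∧ ∀ z : ℂ, H ≤ |z.im| →
    A * Real.exp (c * |z.im|) ≤ ‖f z‖ ∧ ‖f z‖ ≤ B * Real.exp (c * |z.im|)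

namespace HasSineGrowth

variable {c : ℝ} {f g : ℂ → ℂ}

lemma of_norm_comparable (hg : HasSineGrowth c g) {a b h : ℝ} (ha : 0 < a) (hb : 0 < b)
    (hfg : ∀ z : ℂ, h ≤ |z.im| → a * ‖g z‖ ≤ ‖f z‖ ∧ ‖f z‖ ≤ b * ‖g z‖) :
    HasSineGrowth c f := by
  obtain ⟨A, B, H, hA, hB, hH, hgrowth⟩ := hg
  refine ⟨a * A, b * B, max h H, by positivity, by positivity, lt_max_of_lt_right hH,
    fun z hz => ?_⟩
  obtain ⟨hlower, hupper⟩ := hfg z (le_of_max_le_left hz)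
  obtain ⟨hglower, hgupper⟩ := hgrowth z (le_of_max_le_right hz)
  rw [mul_assoc, mul_assoc]
  exact ⟨hlower.trans' (by gcongr), hupper.trans (by gcongr)⟩

lemma div_const (hf : HasSineGrowth c f) {a : ℂ} (ha : a ≠ 0) :
    HasSineGrowth c fun z => f z / a := by
  have hpos : 0 < ‖a‖⁻¹ := inv_pos.2 (norm_pos_iff.2 ha)
  refine hf.of_norm_comparable (h := 0) hpos hpos fun z _ => ?_
  rw [norm_div, div_eq_inv_mul]
  exact ⟨le_rfl, le_rfl⟩

lemma comp_sub_const (hf : HasSineGrowth c f) (d : ℂ) : HasSineGrowth c fun z => f (z - d) := by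
  obtain ⟨A, B, H, hA, hB, hH, hgrowth⟩ := hf
  refine ⟨A * Real.exp (-(|c| * |d.im|)), B * Real.exp (|c| * |d.im|), H + |d.im|,
    by positivity, by positivity, by positivity, fun z hz => ?_⟩
  have him : |(|(z - d).im| - |z.im|)| ≤ |d.im| := by
    simpa using abs_abs_sub_abs_le_abs_sub (z.im - d.im) z.im
  have hexp : |(c * |(z - d).im| - c * |z.im|)| ≤ |c| * |d.im| := by
    rw [← mul_sub, abs_mul]
    gcongr
  obtain ⟨hexp_lower, hexp_upper⟩ := abs_le.1 hexp
  obtain ⟨hlower, hupper⟩ := hgrowth (z - d) (by linarith [(abs_le.1 him).1])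
  rw [mul_assoc, mul_assoc, ← Real.exp_add, ← Real.exp_add]
  refine ⟨hlower.trans' ?_, hupper.trans ?_⟩
  · gcongr
    linarith
  · gcongr
    linarith

/-- The shift hypothesis transports the upper bound into the horizontal strip on which
`HasSineGrowth` says nothing. -/
lemma exists_norm_le_exp (hf : HasSineGrowth c f) (hc : 0 ≤ c) {D : ℝ}
    (hshift : ∀ (z : ℂ) (t : ℝ), 2 * (|z.im| + D) ≤ t → ‖f z‖ ≤ ‖f (z + t * Complex.I)‖) :
    ∃ C > 0, ∀ z : ℂ, ‖f z‖ ≤ C * Real.exp (c * |z.im|) := by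
  obtain ⟨A, B, H, -, hB, hH, hgrowth⟩ := hf
  set t := 2 * (H + |D|)
  have ht : 0 < t := by positivity
  refine ⟨B * Real.exp (c * t), by positivity, fun z => ?_⟩
  rw [mul_assoc, ← Real.exp_add]
  obtain hz | hz := le_total H |z.im|
  · refine (hgrowth z hz).2.trans ?_
    gcongr
    exact le_add_of_nonneg_left (by positivity)
  · have him : (z + t * Complex.I).im = t + z.im := by simp [add_comm]
    have hzt : H ≤ |(z + t * Complex.I).im| := by
      rw [him]
      linarith [le_abs_self (t + z.im), neg_abs_le z.im, abs_nonneg D]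
    calc ‖f z‖ ≤ ‖f (z + t * Complex.I)‖ := hshift z t (by linarith [le_abs_self D])
      _ ≤ B * Real.exp (c * |(z + t * Complex.I).im|) := (hgrowth _ hzt).2
      _ ≤ B * Real.exp (c * t + c * |z.im|) := by
        rw [him, ← mul_add]
        gcongr
        exact (abs_add_le _ _).trans_eq (by rw [abs_of_pos ht])

lemma not_exists_norm_le_exp (hf : HasSineGrowth c f) {σ : ℝ} (hσ : σ < c) :
    ¬∃ C > 0, ∀ z : ℂ, ‖f z‖ ≤ C * Real.exp (σ * ‖z‖) := by
  rintro ⟨C, -, hC⟩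
  obtain ⟨A, B, H, hA, -, hH, hgrowth⟩ := hf
  have hlim : Tendsto (fun y : ℝ => Real.exp ((c - σ) * y)) atTop atTop :=
    Real.tendsto_exp_atTop.comp (tendsto_id.const_mul_atTop (sub_pos.2 hσ))
  obtain ⟨y, hHy, hy⟩ :=
    ((eventually_ge_atTop H).and (hlim.eventually_gt_atTop (C / A))).exists
  have hy0 : 0 < y := hH.trans_le hHy
  have hlower := (hgrowth (y * Complex.I) (by simpa [abs_of_pos hy0])).1
  have hupper := hC (y * Complex.I)
  simp only [Complex.im_ofReal_mul, Complex.I_im, mul_one, norm_mul, Complex.norm_real,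
    Complex.norm_I, Real.norm_eq_abs, abs_of_pos hy0] at hlower hupper
  refine hy.not_ge ?_
  rw [le_div_iff₀ hA, ← mul_le_mul_iff_left₀ (Real.exp_pos (σ * y))]
  calc Real.exp ((c - σ) * y) * A * Real.exp (σ * y) = A * Real.exp (c * y) := by
        rw [mul_right_comm, ← Real.exp_add]
        ring_nf
    _ ≤ C * Real.exp (σ * y) := hlower.trans hupper

end HasSineGrowth

section Growth

lemma norm_sin_sq (u : ℂ) :
    ‖Complex.sin u‖ ^ 2 = Real.sin u.re ^ 2 + Real.sinh u.im ^ 2 := by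
  rw [Complex.sin_eq, ← Complex.ofReal_sin, ← Complex.ofReal_cos, ← Complex.ofReal_sinh,
    ← Complex.ofReal_cosh, ← Complex.ofReal_mul, ← Complex.ofReal_mul, Complex.sq_norm,
    Complex.normSq_add_mul_I, mul_pow, mul_pow, Real.cosh_sq, Real.cos_sq']
  ring

lemma norm_sin_le_exp_abs_im (u : ℂ) : ‖Complex.sin u‖ ≤ Real.exp |u.im| := by
  have hcosh : ‖Complex.sin u‖ ≤ Real.cosh u.im := by
    rw [← sq_le_sq₀ (norm_nonneg _) (Real.cosh_pos _).le, norm_sin_sq, Real.cosh_sq']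
    gcongr
    exact Real.sin_sq_le_one _
  calc ‖Complex.sin u‖ ≤ Real.cosh |u.im| := by rwa [Real.cosh_abs]
    _ ≤ Real.exp |u.im| := by
      rw [← Real.cosh_add_sinh]
      exact le_add_of_nonneg_right (Real.sinh_nonneg_iff.2 (abs_nonneg _))

lemma exp_abs_im_div_four_le_norm_sin {u : ℂ} (hu : 1 ≤ |u.im|) :
    Real.exp |u.im| / 4 ≤ ‖Complex.sin u‖ := by
  have hsinh : |Real.sinh u.im| ≤ ‖Complex.sin u‖ := by
    rw [← sq_le_sq₀ (abs_nonneg _) (norm_nonneg _), norm_sin_sq, sq_abs]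
    exact le_add_of_nonneg_left (sq_nonneg _)
  rw [Real.abs_sinh, Real.sinh_eq] at hsinh
  have hexp := Real.add_one_le_exp |u.im|
  have hexp_neg : Real.exp (-|u.im|) ≤ 1 := Real.exp_le_one_iff.2 (by linarith)
  linarith

lemma hasSineGrowth_sin_mul {c : ℝ} (hc : 0 < c) :
    HasSineGrowth c fun z => Complex.sin (c * z) := by
  refine ⟨1 / 4, 1, 1 / c, by norm_num, one_pos, by positivity, fun z hz => ?_⟩
  have him : |(c * z).im| = c * |z.im| := by
    rw [Complex.im_ofReal_mul, abs_mul, abs_of_pos hc]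
  have hone : 1 ≤ |(c * z).im| := by
    rw [him]
    exact (div_le_iff₀' hc).1 hz
  rw [← him, one_mul, one_div_mul_eq_div]
  exact ⟨exp_abs_im_div_four_le_norm_sin hone, norm_sin_le_exp_abs_im _⟩

variable {d : ℂ} {μ : ℤ → ℂ}

lemma hasSineGrowth_sineLim (hμ : Summable fun k : ℤ => ‖μ k - k - d‖ ^ 2) (hμ0 : μ 0 = 0) :
    HasSineGrowth π (sineLim μ) := by
  obtain ⟨a, b, H, ha, hb, hcomp⟩ := exists_norm_sineProd_comparable hμ hμ0
  have hsin := ((hasSineGrowth_sin_mul Real.pi_pos).div_const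
    (Complex.ofReal_ne_zero.2 Real.pi_ne_zero)).comp_sub_const d
  refine hsin.of_norm_comparable (h := H + |d.im|) ha hb fun z hz => ?_
  have hzd : H ≤ |(z - d).im| := by
    rw [Complex.sub_im]
    linarith [abs_sub_abs_le_abs_sub z.im d.im]
  have hint := (tendsto_sineProd_intCast (z - d)).norm
  have hlim := (tendsto_sineProd hμ (z - d + d)).norm
  rw [sub_add_cancel] at hlim
  have hK := hcomp (z - d) hzd
  rw [sub_add_cancel] at hK
  exact ⟨le_of_tendsto_of_tendsto' (hint.const_mul a) hlim fun K => (hK K).1,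
    le_of_tendsto_of_tendsto' hlim (hint.const_mul b) fun K => (hK K).2⟩

lemma norm_le_norm_add_mul_I {w : ℂ} {t : ℝ} (ht : 2 * |w.im| ≤ t) :
    ‖w‖ ≤ ‖w + t * Complex.I‖ := by
  rw [← sq_le_sq₀ (norm_nonneg _) (norm_nonneg _), Complex.sq_norm, Complex.sq_norm,
    Complex.normSq_apply, Complex.normSq_apply]
  simp only [Complex.add_re, Complex.add_im, Complex.re_ofReal_mul, Complex.im_ofReal_mul,
    Complex.I_re, Complex.I_im]
  nlinarith [neg_abs_le w.im, abs_nonneg w.im]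

lemma norm_sineProd_le_norm_sineProd_add_mul_I {D : ℝ} (hD : ∀ k, |(μ k).im| ≤ D) {z : ℂ} {t : ℝ}
    (ht : 2 * (|z.im| + D) ≤ t) (K : ℕ) :
    ‖sineProd μ K z‖ ≤ ‖sineProd μ K (z + t * Complex.I)‖ := by
  have hD0 : 0 ≤ D := (abs_nonneg _).trans (hD 0)
  have hfactor (k : ℤ) : ‖μ k - z‖ ≤ ‖μ k - (z + t * Complex.I)‖ := by
    have him : |(z - μ k).im| ≤ |z.im| + D := (abs_sub z.im (μ k).im).trans (by gcongr; exact hD k)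
    rw [norm_sub_rev, norm_sub_rev (μ k), add_sub_right_comm]
    exact norm_le_norm_add_mul_I (by linarith)
  simp only [sineProd, symmProd, norm_mul, norm_prod, norm_div]
  gcongr with k
  · exact norm_le_norm_add_mul_I (by linarith)
  · exact hfactor k

lemma norm_sineLim_le_norm_sineLim_add_mul_I (hμ : Summable fun k : ℤ => ‖μ k - k - d‖ ^ 2)
    {D : ℝ} (hD : ∀ k, |(μ k).im| ≤ D) {z : ℂ} {t : ℝ} (ht : 2 * (|z.im| + D) ≤ t) :
    ‖sineLim μ z‖ ≤ ‖sineLim μ (z + t * Complex.I)‖ :=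
  le_of_tendsto_of_tendsto' (tendsto_sineProd hμ _).norm (tendsto_sineProd hμ _).norm
    (norm_sineProd_le_norm_sineProd_add_mul_I hD ht)

end Growth

section Deviations

variable {d : ℂ} {μ : ℤ → ℂ}

lemma summable_norm_sq_of_le_div_abs {a : ℤ → ℂ} {M : ℝ}
    (ha : ∀ k : ℤ, k ≠ 0 → ‖a k‖ ≤ M / |(k : ℝ)|) : Summable fun k => ‖a k‖ ^ 2 := by
  refine ((Real.summable_one_div_int_pow.2 one_lt_two).mul_left
    (M ^ 2)).of_norm_bounded_eventually ?_
  filter_upwards [eventually_cofinite_ne 0] with k hk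
  calc ‖‖a k‖ ^ 2‖ = ‖a k‖ ^ 2 := Real.norm_of_nonneg (by positivity)
    _ ≤ (M / |(k : ℝ)|) ^ 2 := by
      gcongr
      exact ha k hk
    _ = M ^ 2 * (1 / (k : ℝ) ^ 2) := by rw [div_pow, sq_abs, mul_one_div]

lemma tendsto_sub_intCast_of_summable_norm_sq
    (hμ : Summable fun k : ℤ => ‖μ k - k - d‖ ^ 2) :
    Tendsto (fun k : ℤ => μ k - k) cofinite (𝓝 d) := by
  have hsqrt := (Real.continuous_sqrt.tendsto 0).comp hμ.tendsto_cofinite_zero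
  simp only [Real.sqrt_zero, Function.comp_def, Real.sqrt_sq (norm_nonneg _)] at hsqrt
  exact tendsto_sub_nhds_zero_iff.1 (tendsto_zero_iff_norm_tendsto_zero.2 hsqrt)

lemma exists_forall_abs_im_le (hμ : Tendsto (fun k : ℤ => μ k - k) cofinite (𝓝 d)) :
    ∃ D, ∀ k, |(μ k).im| ≤ D := by
  obtain ⟨D, hD⟩ := (Metric.isBounded_range_of_tendsto_cofinite hμ).exists_norm_le
  refine ⟨D, fun k => ?_⟩
  simpa using (Complex.abs_im_le_norm (μ k - k)).trans (hD _ ⟨k, rfl⟩)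

lemma abs_intCast_sub_le (μ : ℤ → ℂ) (k l : ℤ) :
    |((k - l : ℤ) : ℝ)| ≤ ‖μ k - μ l‖ + ‖(μ k - k) - (μ l - l)‖ := by
  have hsplit : ((k - l : ℤ) : ℂ) = (μ k - μ l) - ((μ k - k) - (μ l - l)) := by
    push_cast
    ring
  rw [← Complex.norm_intCast, hsplit]
  exact norm_sub_le _ _

lemma finite_setOf_norm_sub_lt_half (hμ : Tendsto (fun k : ℤ => μ k - k) cofinite (𝓝 d)) :
    {p : ℤ × ℤ | p.1 ≠ p.2 ∧ ‖μ p.1 - μ p.2‖ < 1 / 2}.Finite := by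
  obtain ⟨D, hD⟩ := (Metric.isBounded_range_of_tendsto_cofinite hμ).exists_norm_le
  obtain ⟨N, hN⟩ := exists_nat_ge (1 / 2 + 2 * D)
  set T := {k : ℤ | ¬‖μ k - k - d‖ < 1 / 4}
  have hT : T.Finite := eventually_cofinite.1 <| by
    simpa only [dist_eq_norm] using Metric.tendsto_nhds.1 hμ (1 / 4) (by norm_num)
  have hnear {k l : ℤ} (hkl : ‖μ k - μ l‖ < 1 / 2) : k - l ∈ Set.Icc (-(N : ℤ)) N := by
    rw [Set.mem_Icc, ← abs_le]
    have := norm_sub_le_of_le (hD _ ⟨k, rfl⟩) (hD _ ⟨l, rfl⟩)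
    exact_mod_cast (show |((k - l : ℤ) : ℝ)| ≤ N by linarith [abs_intCast_sub_le μ k l])
  have hfar {k l : ℤ} (hne : k ≠ l) (hkl : ‖μ k - μ l‖ < 1 / 2) : k ∈ T ∨ l ∈ T := by
    by_contra! hkT
    simp only [T, Set.mem_ofPred_eq, not_not] at hkT
    have hone : (1 : ℝ) ≤ |((k - l : ℤ) : ℝ)| := by
      exact_mod_cast Int.one_le_abs (sub_ne_zero.2 hne)
    have hdev := norm_sub_le (μ k - k - d) (μ l - l - d)
    rw [sub_sub_sub_cancel_right] at hdev
    linarith [abs_intCast_sub_le μ k l, hkT.1, hkT.2]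
  have hfinite := hT.add (Set.finite_Icc (-(N : ℤ)) N)
  refine (hfinite.prod hfinite).subset fun ⟨k, l⟩ ⟨hne, hkl⟩ => ?_
  have hself (n : ℤ) : n - n ∈ Set.Icc (-(N : ℤ)) N := by simp
  obtain hk | hl := hfar hne hkl
  · exact ⟨⟨k, hk, k - k, hself k, by simp⟩, ⟨k, hk, l - k, hnear (by rwa [norm_sub_rev]), by simp⟩⟩
  · exact ⟨⟨l, hl, k - l, hnear hkl, by simp⟩, ⟨l, hl, l - l, hself l, by simp⟩⟩

lemma exists_pos_le_norm_sub (hμ : Tendsto (fun k : ℤ => μ k - k) cofinite (𝓝 d))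
    (hinj : Function.Injective μ) : ∃ η > 0, ∀ k l, k ≠ l → η ≤ ‖μ k - μ l‖ := by
  set S := {p : ℤ × ℤ | p.1 ≠ p.2 ∧ ‖μ p.1 - μ p.2‖ < 1 / 2}
  have hclose : ∀ᶠ η : ℝ in 𝓝[>] 0, ∀ p ∈ S, η ≤ ‖μ p.1 - μ p.2‖ :=
    (eventually_all_finite (finite_setOf_norm_sub_lt_half hμ)).2 fun p hp =>
      mem_of_superset (Ioc_mem_nhdsGT (norm_sub_pos_iff.2 (hinj.ne hp.1))) fun η hη => hη.2
  obtain ⟨η, hηS, hη0, hη⟩ := (hclose.and (Ioc_mem_nhdsGT (one_half_pos (α := ℝ)))).exists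
  refine ⟨η, hη0, fun k l hkl => ?_⟩
  by_cases hlt : ‖μ k - μ l‖ < 1 / 2
  · exact hηS (k, l) ⟨hkl, hlt⟩
  · exact hη.trans (not_lt.1 hlt)

end Deviations

theorem sine_type_canonical_product_general {d : ℂ} {μ : ℤ → ℂ}
    (hμ : Summable fun k : ℤ => ‖μ k - k - d‖ ^ 2) (hμ0 : μ 0 = 0)
    (hinj : Function.Injective μ) :
    ∃ f : ℂ → ℂ,
      TendstoLocallyUniformly (canonicalProd μ) f atTop ∧
      Differentiable ℂ f ∧
      (∀ ε > (0 : ℝ), ∃ C > (0 : ℝ), ∀ z : ℂ, ‖f z‖ ≤ C * Real.exp ((π + ε) * ‖z‖)) ∧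
      (∀ ε > (0 : ℝ), ¬∃ C > (0 : ℝ), ∀ z : ℂ, ‖f z‖ ≤ C * Real.exp ((π - ε) * ‖z‖)) ∧
      (∀ k : ℤ, f (μ k) = 0) ∧
      (∃ η > (0 : ℝ), ∀ k l : ℤ, k ≠ l → η ≤ ‖μ k - μ l‖) ∧
      HasSineGrowth π f := by
  have hne (k : ℤ) (hk : k ≠ 0) : μ k ≠ 0 := hμ0 ▸ hinj.ne hk
  have hdev := tendsto_sub_intCast_of_summable_norm_sq hμ
  have hgrowth := (hasSineGrowth_sineLim hμ hμ0).div_const (symmTprod_div_ne_zero hμ hne)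
  obtain ⟨D, hD⟩ := exists_forall_abs_im_le hdev
  obtain ⟨C, hC, hbound⟩ := hgrowth.exists_norm_le_exp Real.pi_pos.le (D := D) fun z t ht => by
    rw [norm_div, norm_div]
    gcongr
    exact norm_sineLim_le_norm_sineLim_add_mul_I hμ hD ht
  refine ⟨_, tendstoLocallyUniformly_canonicalProd hμ hne,
    (differentiable_sineLim hμ).div_const _, fun ε hε => ⟨C, hC, fun z => (hbound z).trans ?_⟩,
    fun ε hε => hgrowth.not_exists_norm_le_exp (sub_lt_self π hε), fun k => ?_,
    exists_pos_le_norm_sub hdev hinj, hgrowth⟩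
  · gcongr
    · exact le_add_of_nonneg_right hε.le
    · exact Complex.abs_im_le_norm z
  · rw [sineLim_apply_eq_zero hμ hμ0, zero_div]

/-- **A sufficient condition for a canonical product to be a function of sine type
(Corollary to Levin's theorem).**  If `μ_k = k + d_k` with `μ_0 = 0`, `d_k = d + O(1/k)`
and the `μ_k` pairwise distinct, then `f(z) = z ∏_{k ≠ 0} (1 - z/μ_k)` (symmetric limit)
is an entire function of sine type: it has exponential type exactly `π`, its zeros `μ_k`
are separated, and `A e^{π|Im z|} ≤ |f(z)| ≤ B e^{π|Im z|}` for `|Im z| ≥ H`. -/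
theorem sine_type_canonical_product
    (d : ℂ) (M : ℝ) (hM : 0 < M) (μ : ℤ → ℂ)
    (hμ0 : μ 0 = 0)
    (hform : ∀ k : ℤ, k ≠ 0 → ‖μ k - (k:ℂ) - d‖ ≤ M / |(k:ℝ)|)
    (hinj : ∀ k l : ℤ, k ≠ l → μ k ≠ μ l) :
    ∃ f : ℂ → ℂ,
      -- the symmetric partial products converge locally uniformly to f
      TendstoLocallyUniformly
        (fun (K : ℕ) (z : ℂ) =>
          z * ∏ k ∈ (Finset.Icc (-(K:ℤ)) (K:ℤ)).erase 0, (1 - z / μ k))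
        f atTop ∧
      -- (a) f is entire of exponential type π
      Differentiable ℂ f ∧
      (∀ ε > (0:ℝ), ∃ C > (0:ℝ), ∀ z : ℂ, ‖f z‖ ≤ C * Real.exp ((π + ε) * ‖z‖)) ∧
      (∀ ε > (0:ℝ), ¬ ∃ C > (0:ℝ), ∀ z : ℂ, ‖f z‖ ≤ C * Real.exp ((π - ε) * ‖z‖)) ∧
      -- the μ_k are zeros of f
      (∀ k : ℤ, f (μ k) = 0) ∧
      -- (b) the zeros are separated
      (∃ η > (0:ℝ), ∀ k l : ℤ, k ≠ l → η ≤ ‖μ k - μ l‖) ∧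
      -- (c) two-sided exponential bounds away from the real axis
      (∃ A B H : ℝ, 0 < A ∧ 0 < B ∧ 0 < H ∧ ∀ z : ℂ, H ≤ |z.im| →
        A * Real.exp (π * |z.im|) ≤ ‖f z‖ ∧ ‖f z‖ ≤ B * Real.exp (π * |z.im|)) :=
  sine_type_canonical_product_general (summable_norm_sq_of_le_div_abs hform) hμ0
    fun _ _ => not_imp_not.1 (hinj _ _)
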